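/- arXiv:1811.12588 — 2 statements merged into one kernel-verified Lean document; each statement's English description precedes it below -/
import Mathlib

section
/- Let R be a rigid subcategory of C and X a two-term maximal R[1]-rigid subcategory of C. For any object R₀ ∈ R, if there exists a triangle M[-1] →f X[-1] →g R₀ →h M in C such that g : X[-1] → R₀ is a right X[-1]-approximation of R₀, then M ∈ X. -/
/-!
Setting: `C` is a Hom-finite Krull–Schmidt `k`-linear triangulated category over an
algebraically closed field `k` (Krull–Schmidt is encoded as Hom-finiteness together with
idempotent completeness). Subcategories are identified with their classes of objects and
are always assumed full, closed under isomorphisms, direct sums and direct summands.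
-/

open CategoryTheory CategoryTheory.Limits CategoryTheory.Pretriangulated Opposite

universe v u

variable {C : Type u} [Category.{v} C] [Preadditive C] [HasZeroObject C] [HasShift C ℤ]
  [∀ n : ℤ, (shiftFunctor C n).Additive] [Pretriangulated C]

/-- `Y` is a direct summand (retract) of `X`. -/
def IsRetractOf {D : Type*} [Category D] (Y X : D) : Prop :=
  ∃ (s : Y ⟶ X) (r : X ⟶ Y), s ≫ r = 𝟙 Y

/-- `S` is a direct sum (biproduct) of `F` and `G`. -/
def IsDirectSumOf {D : Type*} [Category D] [Preadditive D] (S F G : D) : Prop :=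
  ∃ (i : F ⟶ S) (j : G ⟶ S) (p : S ⟶ F) (q : S ⟶ G),
    i ≫ p = 𝟙 F ∧ j ≫ q = 𝟙 G ∧ i ≫ q = 0 ∧ j ≫ p = 0 ∧ p ≫ i + q ≫ j = 𝟙 S

/-- A subcategory of an additive category, identified with its class of objects:
closed under isomorphisms, finite direct sums and direct summands. -/
def IsSubcat {D : Type*} [Category D] [Preadditive D] (S : Set D) : Prop :=
  (∀ ⦃X Y : D⦄, (X ≅ Y) → X ∈ S → Y ∈ S) ∧
  (∀ ⦃F G T : D⦄, F ∈ S → G ∈ S → IsDirectSumOf T F G → T ∈ S) ∧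
  (∀ ⦃X Y : D⦄, X ∈ S → IsRetractOf Y X → Y ∈ S)

/-- `f : X ⟶ A` is a right `𝓧`-approximation of `A`:
every map `X' ⟶ A` with `X' ∈ 𝓧` factors through `f`. -/
def IsRightApprox {D : Type*} [Category D] (𝓧 : Set D) {X A : D} (f : X ⟶ A) : Prop :=
  ∀ X' ∈ 𝓧, ∀ g : X' ⟶ A, ∃ h : X' ⟶ X, h ≫ f = g

/-- `f : A ⟶ X` is a left `𝓧`-approximation of `A`:
every map `A ⟶ X'` with `X' ∈ 𝓧` factors through `f`. -/
def IsLeftApprox {D : Type*} [Category D] (𝓧 : Set D) {A X : D} (f : A ⟶ X) : Prop :=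
  ∀ X' ∈ 𝓧, ∀ g : A ⟶ X', ∃ h : X ⟶ X', f ≫ h = g

/-- `𝓧` is contravariantly finite: every object admits a right `𝓧`-approximation. -/
def ContravariantlyFinite {D : Type*} [Category D] (𝓧 : Set D) : Prop :=
  ∀ A : D, ∃ X ∈ 𝓧, ∃ f : X ⟶ A, IsRightApprox 𝓧 f

/-- `𝓧` is covariantly finite: every object admits a left `𝓧`-approximation. -/
def CovariantlyFinite {D : Type*} [Category D] (𝓧 : Set D) : Prop :=
  ∀ A : D, ∃ X ∈ 𝓧, ∃ f : A ⟶ X, IsLeftApprox 𝓧 f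

/-- `𝓧` is functorially finite. -/
def FunctoriallyFinite {D : Type*} [Category D] (𝓧 : Set D) : Prop :=
  ContravariantlyFinite 𝓧 ∧ CovariantlyFinite 𝓧

/-- `𝓧 ∨ add M`: the smallest subcategory containing `𝓧` and `M`. -/
def veeAdd {D : Type*} [Category D] [Preadditive D] (𝓧 : Set D) (M : D) : Set D :=
  ⋂₀ {T : Set D | IsSubcat T ∧ 𝓧 ⊆ T ∧ M ∈ T}

/-- The shift `𝓢⟦n⟧` of a subcategory (closed under isomorphism). -/
def shiftSet (𝓢 : Set C) (n : ℤ) : Set C := {Y | ∃ X ∈ 𝓢, Nonempty (Y ≅ X⟦n⟧)}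

/-- `𝓐 ∗ 𝓑`: the class of objects `M` admitting a distinguished triangle
`A → M → B → A⟦1⟧` with `A ∈ 𝓐` and `B ∈ 𝓑`. -/
def starSet (𝓐 𝓑 : Set C) : Set C :=
  {M | ∃ A ∈ 𝓐, ∃ B ∈ 𝓑, ∃ (f : A ⟶ M) (g : M ⟶ B) (h : B ⟶ A⟦(1:ℤ)⟧),
    Triangle.mk f g h ∈ distTriang C}

/-- `𝓡 ∗ 𝓡[1]`, the class of two-term objects with respect to `𝓡`. -/
def twoTerm (𝓡 : Set C) : Set C := starSet 𝓡 (shiftSet 𝓡 1)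

/-- `𝓡` is rigid: `Hom(R, R'[1]) = 0` for all `R, R' ∈ 𝓡`. -/
def IsRigidSubcat (𝓡 : Set C) : Prop :=
  ∀ R ∈ 𝓡, ∀ R' ∈ 𝓡, ∀ φ : R ⟶ R'⟦(1:ℤ)⟧, φ = 0

/-- `φ` lies in the ideal `[𝓡[1]]` of morphisms factoring through an object of `𝓡⟦1⟧`. -/
def InShiftIdeal (𝓡 : Set C) {A B : C} (φ : A ⟶ B) : Prop :=
  ∃ R ∈ 𝓡, ∃ (a : A ⟶ R⟦(1:ℤ)⟧) (b : R⟦(1:ℤ)⟧ ⟶ B), φ = a ≫ b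

/-- `𝓧` is `𝓡[1]`-rigid: `[𝓡[1]](𝓧, 𝓧[1]) = 0`. -/
def IsRelRigid (𝓡 𝓧 : Set C) : Prop :=
  ∀ X ∈ 𝓧, ∀ X' ∈ 𝓧, ∀ φ : X ⟶ X'⟦(1:ℤ)⟧, InShiftIdeal 𝓡 φ → φ = 0

/-- `[𝓡[1]](M, 𝓧[1]) = 0`. -/
def relOrthTo (𝓡 𝓧 : Set C) (M : C) : Prop :=
  ∀ X ∈ 𝓧, ∀ φ : M ⟶ X⟦(1:ℤ)⟧, InShiftIdeal 𝓡 φ → φ = 0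

/-- `[𝓡[1]](𝓧, M[1]) = 0`. -/
def relOrthFrom (𝓡 𝓧 : Set C) (M : C) : Prop :=
  ∀ X ∈ 𝓧, ∀ φ : X ⟶ M⟦(1:ℤ)⟧, InShiftIdeal 𝓡 φ → φ = 0

/-- `𝓧 ⊆ 𝓡 ∗ 𝓡[1]` is two-term maximal `𝓡[1]`-rigid: it is `𝓡[1]`-rigid and for every
`M ∈ 𝓡 ∗ 𝓡[1]`, `[𝓡[1]](𝓧 ∨ add M, (𝓧 ∨ add M)[1]) = 0` implies `M ∈ 𝓧`. -/
def IsTwoTermMaxRelRigid (𝓡 𝓧 : Set C) : Prop :=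
  𝓧 ⊆ twoTerm 𝓡 ∧ IsRelRigid 𝓡 𝓧 ∧
  ∀ M ∈ twoTerm 𝓡, IsRelRigid 𝓡 (veeAdd 𝓧 M) → M ∈ 𝓧

/-- `𝓧 ⊆ 𝓡 ∗ 𝓡[1]` is two-term weak `𝓡[1]`-cluster tilting: `𝓡 ⊆ 𝓧[-1] ∗ 𝓧` and
`𝓧 = {M ∈ 𝓡 ∗ 𝓡[1] : [𝓡[1]](M, 𝓧[1]) = 0 and [𝓡[1]](𝓧, M[1]) = 0}`. -/
def IsTwoTermWeakRelCT (𝓡 𝓧 : Set C) : Prop :=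
  𝓧 ⊆ twoTerm 𝓡 ∧
  (∀ R ∈ 𝓡, R ∈ starSet (shiftSet 𝓧 (-1)) 𝓧) ∧
  (∀ M : C, M ∈ 𝓧 ↔ M ∈ twoTerm 𝓡 ∧ relOrthTo 𝓡 𝓧 M ∧ relOrthFrom 𝓡 𝓧 M)

/-- `𝓧 ⊆ 𝓡 ∗ 𝓡[1]` is two-term `𝓡[1]`-cluster tilting: `𝓧` is contravariantly finite and
`𝓧 = {M ∈ 𝓡 ∗ 𝓡[1] : [𝓡[1]](M, 𝓧[1]) = 0 and [𝓡[1]](𝓧, M[1]) = 0}`. -/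
def IsTwoTermRelCT (𝓡 𝓧 : Set C) : Prop :=
  𝓧 ⊆ twoTerm 𝓡 ∧ ContravariantlyFinite 𝓧 ∧
  (∀ M : C, M ∈ 𝓧 ↔ M ∈ twoTerm 𝓡 ∧ relOrthTo 𝓡 𝓧 M ∧ relOrthFrom 𝓡 𝓧 M)

/-!
Let `b : M ⟶ X` be the middle map of the rotated triangle `R₀ ⟶ M ⟶ X ⟶ R₀⟦1⟧`. Rigidity of `𝓡`
lets every map `M ⟶ R⟦1⟧` with `R ∈ 𝓡` factor through `b`, so `[𝓡[1]](M, -)` is controlled by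
`[𝓡[1]](X, -)`. Dually, as `𝓧` is `𝓡[1]`-rigid, a map `X' ⟶ M⟦1⟧` in `[𝓡[1]]` with `X' ∈ 𝓧` is
killed by `b⟦1⟧`; hence it factors through `R₀⟦1⟧`, then through the approximation `X ⟶ R₀⟦1⟧`, and
the composite `X ⟶ R₀⟦1⟧ ⟶ M⟦1⟧` of the triangle is zero. Thus `𝓧 ∨ add M` is `𝓡[1]`-rigid, and
maximality applies once `M ∈ 𝓡 ∗ 𝓡[1]`.

The last point is usually deduced from `𝓡 ∗ (𝓡 ∗ 𝓡[1]) = (𝓡 ∗ 𝓡) ∗ 𝓡[1]`. As `C` is only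
pretriangulated, the octahedral axiom is replaced by a splitting: given a triangle
`R₁ ⟶ X ⟶ R₂⟦1⟧ ⟶ R₁⟦1⟧`, lift `R₁ ⟶ X` to `M`; the cone of the resulting map `R₀ ⊞ R₁ ⟶ M` is a
direct summand of `(R₀ ⊞ R₁)⟦1⟧ ⊞ R₂⟦1⟧`.
-/

section Subcat

variable {D : Type*} [Category D] {E : Type*} [Category E]

lemma IsRetractOf.map (F : D ⥤ E) {X Y : D} (h : IsRetractOf Y X) :
    IsRetractOf (F.obj Y) (F.obj X) := by
  obtain ⟨s, r, hsr⟩ := h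
  exact ⟨F.map s, F.map r, by rw [← F.map_comp, hsr, F.map_id]⟩

variable [Preadditive D] [Preadditive E]

lemma IsDirectSumOf.map (F : D ⥤ E) [F.Additive] {S A B : D} (h : IsDirectSumOf S A B) :
    IsDirectSumOf (F.obj S) (F.obj A) (F.obj B) := by
  obtain ⟨i, j, p, q, hip, hjq, hiq, hjp, hsum⟩ := h
  refine ⟨F.map i, F.map j, F.map p, F.map q, ?_, ?_, ?_, ?_, ?_⟩ <;>
    simp only [← F.map_comp, ← F.map_add, hip, hjq, hiq, hjp, hsum, F.map_id, F.map_zero]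

lemma isDirectSumOf_biprod (A B : D) [HasBinaryBiproduct A B] : IsDirectSumOf (A ⊞ B) A B :=
  ⟨biprod.inl, biprod.inr, biprod.fst, biprod.snd, biprod.inl_fst, biprod.inr_snd,
    biprod.inl_snd, biprod.inr_fst, biprod.total⟩

lemma isSubcat_of_directSum_of_retract {S : Set D}
    (hsum : ∀ ⦃A B T : D⦄, A ∈ S → B ∈ S → IsDirectSumOf T A B → T ∈ S)
    (hretract : ∀ ⦃X Y : D⦄, X ∈ S → IsRetractOf Y X → Y ∈ S) : IsSubcat S :=
  ⟨fun _ _ e hX => hretract hX ⟨e.inv, e.hom, e.inv_hom_id⟩, hsum, hretract⟩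

lemma IsSubcat.preimage {S : Set E} (hS : IsSubcat S) (F : D ⥤ E) [F.Additive] :
    IsSubcat (F.obj ⁻¹' S) :=
  isSubcat_of_directSum_of_retract (fun _ _ _ hA hB hT => hS.2.1 hA hB (hT.map F))
    (fun _ _ hX hY => hS.2.2 hX (hY.map F))

lemma IsSubcat.biprod_mem {S : Set D} (hS : IsSubcat S) {A B : D} [HasBinaryBiproduct A B]
    (hA : A ∈ S) (hB : B ∈ S) : (A ⊞ B) ∈ S :=
  hS.2.1 hA hB (isDirectSumOf_biprod A B)

lemma veeAdd_subset {𝓧 T : Set D} {M : D} (hT : IsSubcat T) (h𝓧 : 𝓧 ⊆ T) (hM : M ∈ T) :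
    veeAdd 𝓧 M ⊆ T :=
  Set.sInter_subset_of_mem ⟨hT, h𝓧, hM⟩

end Subcat

section Shift

variable {D : Type*} [Category D] [HasShift D ℤ]

lemma shift_mem_shiftSet {𝓢 : Set D} {X : D} (hX : X ∈ 𝓢) (n : ℤ) : X⟦n⟧ ∈ shiftSet 𝓢 n :=
  ⟨X, hX, ⟨Iso.refl _⟩⟩

lemma IsRightApprox.shift {𝓧 : Set D} {n : ℤ} {X A : D} {g : X⟦-n⟧ ⟶ A}
    (hg : IsRightApprox (shiftSet 𝓧 (-n)) g) :
    IsRightApprox 𝓧 ((shiftNegShift X n).inv ≫ g⟦n⟧') := by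
  intro Y hY w
  obtain ⟨w₀, hw₀⟩ := (shiftFunctor D n).map_surjective ((shiftNegShift Y n).hom ≫ w)
  obtain ⟨l, hl⟩ := hg _ (shift_mem_shiftSet hY (-n)) w₀
  refine ⟨(shiftNegShift Y n).inv ≫ l⟦n⟧' ≫ (shiftNegShift X n).hom, ?_⟩
  simp only [Category.assoc, Iso.hom_inv_id_assoc]
  rw [← Functor.map_comp, hl, hw₀, Iso.inv_hom_id_assoc]

variable [Preadditive D]

lemma IsSubcat.shiftSet_eq_preimage {𝓢 : Set D} (h𝓢 : IsSubcat 𝓢) (n : ℤ) :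
    shiftSet 𝓢 n = (shiftFunctor D (-n)).obj ⁻¹' 𝓢 := by
  ext Y
  constructor
  · rintro ⟨X, hX, ⟨e⟩⟩
    exact h𝓢.1 ((shiftFunctor D (-n)).mapIso e ≪≫ shiftShiftNeg X n).symm hX
  · intro hY
    exact ⟨Y⟦-n⟧, hY, ⟨(shiftNegShift Y n).symm⟩⟩

lemma isSubcat_shiftSet [∀ n : ℤ, (shiftFunctor D n).Additive] {𝓢 : Set D} (h𝓢 : IsSubcat 𝓢)
    (n : ℤ) : IsSubcat (shiftSet 𝓢 n) := by
  rw [h𝓢.shiftSet_eq_preimage n]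
  exact h𝓢.preimage _

end Shift

section RelativeRigidity

variable {D : Type*} [Category D] [HasShift D ℤ]

lemma InShiftIdeal.precomp {𝓡 : Set D} {A B E : D} (u : A ⟶ B) {φ : B ⟶ E}
    (hφ : InShiftIdeal 𝓡 φ) : InShiftIdeal 𝓡 (u ≫ φ) := by
  obtain ⟨R, hR, a, b, rfl⟩ := hφ
  exact ⟨R, hR, u ≫ a, b, (Category.assoc _ _ _).symm⟩

lemma InShiftIdeal.postcomp {𝓡 : Set D} {A B E : D} {φ : A ⟶ B} (hφ : InShiftIdeal 𝓡 φ)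
    (u : B ⟶ E) : InShiftIdeal 𝓡 (φ ≫ u) := by
  obtain ⟨R, hR, a, b, rfl⟩ := hφ
  exact ⟨R, hR, a, b ≫ u, Category.assoc _ _ _⟩

variable [Preadditive D]

lemma isSubcat_relOrthTo (𝓡 𝓔 : Set D) : IsSubcat {Y | relOrthTo 𝓡 𝓔 Y} := by
  apply isSubcat_of_directSum_of_retract
  · rintro A B T hA hB ⟨i, j, p, q, -, -, -, -, hsum⟩ E hE φ hφ
    calc φ = p ≫ i ≫ φ + q ≫ j ≫ φ := by
          rw [← Category.assoc, ← Category.assoc, ← Preadditive.add_comp, hsum, Category.id_comp]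
      _ = 0 := by
          rw [hA E hE _ (hφ.precomp i), hB E hE _ (hφ.precomp j), comp_zero, comp_zero, add_zero]
  · rintro X Y hX ⟨s, r, hsr⟩ E hE φ hφ
    rw [← Category.id_comp φ, ← hsr, Category.assoc, hX E hE _ (hφ.precomp r), comp_zero]

variable [∀ n : ℤ, (shiftFunctor D n).Additive]

lemma isSubcat_relOrthFrom (𝓡 𝓔 : Set D) : IsSubcat {Y | relOrthFrom 𝓡 𝓔 Y} := by
  apply isSubcat_of_directSum_of_retract
  · intro A B T hA hB hT E hE φ hφ
    obtain ⟨i, j, p, q, -, -, -, -, hsum⟩ := hT.map (shiftFunctor D (1 : ℤ))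
    calc φ = (φ ≫ p) ≫ i + (φ ≫ q) ≫ j := by
          rw [Category.assoc, Category.assoc, ← Preadditive.comp_add, hsum, Category.comp_id]
      _ = 0 := by
          rw [hA E hE _ (hφ.postcomp p), hB E hE _ (hφ.postcomp q), zero_comp, zero_comp, add_zero]
  · intro X Y hX hY E hE φ hφ
    obtain ⟨s, r, hsr⟩ := hY.map (shiftFunctor D (1 : ℤ))
    rw [← Category.comp_id φ, ← hsr, ← Category.assoc, hX E hE _ (hφ.postcomp s), zero_comp]

lemma isRelRigid_veeAdd {𝓡 𝓧 : Set D} {M : D} (h : IsRelRigid 𝓡 (insert M 𝓧)) :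
    IsRelRigid 𝓡 (veeAdd 𝓧 M) := by
  have horth : ∀ Y ∈ veeAdd 𝓧 M, relOrthTo 𝓡 (insert M 𝓧) Y := fun Y hY =>
    veeAdd_subset (isSubcat_relOrthTo 𝓡 _) (fun X hX => h X (Set.mem_insert_of_mem M hX))
      (h M (Set.mem_insert M 𝓧)) hY
  intro Y hY Y' hY'
  exact veeAdd_subset (isSubcat_relOrthFrom 𝓡 (veeAdd 𝓧 M))
    (fun X hX Z hZ => horth Z hZ X (Set.mem_insert_of_mem M hX))
    (fun Z hZ => horth Z hZ M (Set.mem_insert M 𝓧)) hY' Y hY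

end RelativeRigidity

section Triangles

lemma distTriang_rotate_rotate_of_iso {T₁ T₂ T₃ Y Z : C} {f : T₁ ⟶ T₂} {g : T₂ ⟶ T₃}
    {h : T₃ ⟶ T₁⟦(1 : ℤ)⟧} (htri : Triangle.mk f g h ∈ distTriang C) (e₁ : T₁⟦(1 : ℤ)⟧ ≅ Y)
    (e₂ : T₂⟦(1 : ℤ)⟧ ≅ Z) :
    Triangle.mk (h ≫ e₁.hom) (e₁.inv ≫ f⟦(1 : ℤ)⟧' ≫ e₂.hom) (e₂.inv ≫ g⟦(1 : ℤ)⟧') ∈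
      distTriang C := by
  have hrot : Triangle.mk h (-f⟦(1 : ℤ)⟧') (-g⟦(1 : ℤ)⟧') ∈ distTriang C :=
    rot_of_distTriang _ (rot_of_distTriang _ htri)
  have comm₁ : (h ≫ e₁.hom) ≫ e₁.inv = 𝟙 T₃ ≫ h := by simp
  have comm₂ : (e₁.inv ≫ f⟦(1 : ℤ)⟧' ≫ e₂.hom) ≫ (-e₂.inv) = e₁.inv ≫ (-f⟦(1 : ℤ)⟧') := by simp
  have comm₃ : (e₂.inv ≫ g⟦(1 : ℤ)⟧') ≫ (𝟙 T₃)⟦(1 : ℤ)⟧' = (-e₂.inv) ≫ (-g⟦(1 : ℤ)⟧') := by simp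
  -- Taking `-e₂` at the third vertex absorbs the signs introduced by the two rotations.
  exact isomorphic_distinguished _ hrot _
    (Triangle.isoMk _ _ (Iso.refl T₃) e₁.symm (-e₂.symm) comm₁ comm₂ comm₃)

lemma isRetractOf_shift_biprod_of_factorsThru {P M Z S : C} {p : P ⟶ M} {q : M ⟶ Z}
    {d : Z ⟶ P⟦(1 : ℤ)⟧} (hZ : Triangle.mk p q d ∈ distTriang C) {σ : M ⟶ S} (hσ : p ≫ σ = 0)
    {ω : S ⟶ Z} (hω : σ ≫ ω = q) : IsRetractOf Z (P⟦(1 : ℤ)⟧ ⊞ S) := by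
  obtain ⟨ζ, rfl⟩ : ∃ ζ : Z ⟶ S, σ = q ≫ ζ := Triangle.yoneda_exact₂ _ hZ σ hσ
  have hq : q ≫ (𝟙 Z - ζ ≫ ω) = 0 := by
    rw [Preadditive.comp_sub, Category.comp_id, ← Category.assoc, hω, sub_self]
  obtain ⟨t, ht⟩ : ∃ t : P⟦(1 : ℤ)⟧ ⟶ Z, 𝟙 Z - ζ ≫ ω = d ≫ t :=
    Triangle.yoneda_exact₃ _ hZ _ hq
  exact ⟨biprod.lift d ζ, biprod.desc t ω, by rw [biprod.lift_desc, ← ht, sub_add_cancel]⟩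

lemma exists_distTriang_biprod_isRetractOf {A M X B S : C} {a : A ⟶ M} {b : M ⟶ X}
    {c : X ⟶ A⟦(1 : ℤ)⟧} (hM : Triangle.mk a b c ∈ distTriang C) {x : B ⟶ X} {τ : X ⟶ S}
    {δ : S ⟶ B⟦(1 : ℤ)⟧} (hX : Triangle.mk x τ δ ∈ distTriang C) (hxc : x ≫ c = 0) :
    ∃ (Z : C) (p : A ⊞ B ⟶ M) (q : M ⟶ Z) (d : Z ⟶ (A ⊞ B)⟦(1 : ℤ)⟧),
      Triangle.mk p q d ∈ distTriang C ∧ IsRetractOf Z ((A ⊞ B)⟦(1 : ℤ)⟧ ⊞ S) := by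
  obtain ⟨m, rfl⟩ : ∃ m : B ⟶ M, x = m ≫ b := Triangle.coyoneda_exact₃ _ hM x hxc
  obtain ⟨Z, q, d, hZ⟩ := distinguished_cocone_triangle (biprod.desc a m)
  have hpq : biprod.desc a m ≫ q = 0 := comp_distTriang_mor_zero₁₂ _ hZ
  have haq : a ≫ q = 0 := by simpa using biprod.inl ≫= hpq
  have hmq : m ≫ q = 0 := by simpa using biprod.inr ≫= hpq
  obtain ⟨y, rfl⟩ : ∃ y : X ⟶ Z, q = b ≫ y := Triangle.yoneda_exact₂ _ hM q haq
  obtain ⟨ω, rfl⟩ : ∃ ω : S ⟶ Z, y = τ ≫ ω :=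
    Triangle.yoneda_exact₂ _ hX y ((Category.assoc _ _ _).trans hmq)
  have hab : a ≫ b = 0 := comp_distTriang_mor_zero₁₂ _ hM
  have hmbτ : (m ≫ b) ≫ τ = 0 := comp_distTriang_mor_zero₁₂ _ hX
  have hpbτ : biprod.desc a m ≫ b ≫ τ = 0 := by
    apply biprod.hom_ext'
    · rw [biprod.inl_desc_assoc, reassoc_of% hab, zero_comp, comp_zero]
    · rw [biprod.inr_desc_assoc, ← Category.assoc, hmbτ, comp_zero]
  exact ⟨Z, _, _, d, hZ,
    isRetractOf_shift_biprod_of_factorsThru hZ hpbτ (Category.assoc _ _ _)⟩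

variable {𝓡 𝓧 : Set C} {A M X : C} {a : A ⟶ M} {b : M ⟶ X} {c : X ⟶ A⟦(1 : ℤ)⟧}

lemma mem_twoTerm_of_distTriang (h𝓡sub : IsSubcat 𝓡) (h𝓡 : IsRigidSubcat 𝓡) (hA : A ∈ 𝓡)
    (hX : X ∈ twoTerm 𝓡) (htri : Triangle.mk a b c ∈ distTriang C) : M ∈ twoTerm 𝓡 := by
  obtain ⟨B, hB, S, hS, x, τ, δ, hXtri⟩ := hX
  obtain ⟨Z, p, q, d, hZtri, hZ⟩ :=
    exists_distTriang_biprod_isRetractOf htri hXtri (h𝓡 B hB A hA (x ≫ c))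
  have hAB : (A ⊞ B) ∈ 𝓡 := h𝓡sub.biprod_mem hA hB
  have h𝓡shift : IsSubcat (shiftSet 𝓡 1) := isSubcat_shiftSet h𝓡sub 1
  exact ⟨A ⊞ B, hAB, Z,
    h𝓡shift.2.2 (h𝓡shift.biprod_mem (shift_mem_shiftSet hAB 1) hS) hZ, p, q, d, hZtri⟩

lemma relOrthTo_of_distTriang (hA : ∀ R ∈ 𝓡, ∀ φ : A ⟶ R⟦(1 : ℤ)⟧, φ = 0)
    (htri : Triangle.mk a b c ∈ distTriang C) (hX : relOrthTo 𝓡 𝓧 X) : relOrthTo 𝓡 𝓧 M := by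
  rintro E hE _ ⟨R, hR, u, v, rfl⟩
  obtain ⟨w, rfl⟩ : ∃ w : X ⟶ R⟦(1 : ℤ)⟧, u = b ≫ w :=
    Triangle.yoneda_exact₂ _ htri u (hA R hR (a ≫ u))
  rw [Category.assoc, hX E hE (w ≫ v) ⟨R, hR, w, v, rfl⟩, comp_zero]

lemma relOrthFrom_of_distTriang_of_isRightApprox (hX : relOrthFrom 𝓡 𝓧 X)
    (htri : Triangle.mk a b c ∈ distTriang C) (hc : IsRightApprox 𝓧 c) :
    relOrthFrom 𝓡 𝓧 M := by
  intro E hE φ hφ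
  have hφb : φ ≫ b⟦(1 : ℤ)⟧' = 0 := hX E hE _ (hφ.postcomp _)
  obtain ⟨w, rfl⟩ : ∃ w : E ⟶ A⟦(1 : ℤ)⟧, φ = w ≫ (-a⟦(1 : ℤ)⟧') :=
    Triangle.coyoneda_exact₁ _ (rot_of_distTriang _ htri) φ hφb
  obtain ⟨v, rfl⟩ := hc E hE w
  have hca : c ≫ a⟦(1 : ℤ)⟧' = 0 := comp_distTriang_mor_zero₃₁ _ htri
  rw [Preadditive.comp_neg, Category.assoc, hca, comp_zero, neg_zero]

theorem IsTwoTermMaxRelRigid.mem_of_distTriang_of_isRightApprox (h𝓡sub : IsSubcat 𝓡)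
    (h𝓡 : IsRigidSubcat 𝓡) (h𝓧 : IsTwoTermMaxRelRigid 𝓡 𝓧) (hA : A ∈ 𝓡) (hX : X ∈ 𝓧)
    (htri : Triangle.mk a b c ∈ distTriang C) (hc : IsRightApprox 𝓧 c) : M ∈ 𝓧 := by
  obtain ⟨h𝓧two, h𝓧rigid, h𝓧max⟩ := h𝓧
  have hfrom : relOrthFrom 𝓡 𝓧 M :=
    relOrthFrom_of_distTriang_of_isRightApprox (fun Y hY => h𝓧rigid Y hY X hX) htri hc
  have h𝓧orth : ∀ Y ∈ 𝓧, relOrthTo 𝓡 (insert M 𝓧) Y := by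
    rintro Y hY E (rfl | hE)
    exacts [hfrom Y hY, h𝓧rigid Y hY E hE]
  have hMorth : relOrthTo 𝓡 (insert M 𝓧) M :=
    relOrthTo_of_distTriang (h𝓡 A hA) htri (h𝓧orth X hX)
  have hrigid : IsRelRigid 𝓡 (insert M 𝓧) := by
    rintro Y (rfl | hY)
    exacts [hMorth, h𝓧orth Y hY]
  exact h𝓧max M (mem_twoTerm_of_distTriang h𝓡sub h𝓡 hA (h𝓧two hX) htri)
    (isRelRigid_veeAdd hrigid)

end Triangles

theorem mem_of_triangle_rightApprox_general
    {𝓡 𝓧 : Set C} (h𝓡sub : IsSubcat 𝓡) (h𝓡 : IsRigidSubcat 𝓡)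
    (h𝓧max : IsTwoTermMaxRelRigid 𝓡 𝓧) {R₀ M X : C} (hR₀ : R₀ ∈ 𝓡) (hX : X ∈ 𝓧)
    {f : M⟦(-1 : ℤ)⟧ ⟶ X⟦(-1 : ℤ)⟧} {g : X⟦(-1 : ℤ)⟧ ⟶ R₀} {h : R₀ ⟶ M⟦(-1 : ℤ)⟧⟦(1 : ℤ)⟧}
    (htri : Triangle.mk f g h ∈ distTriang C) (happrox : IsRightApprox (shiftSet 𝓧 (-1)) g) :
    M ∈ 𝓧 :=
  h𝓧max.mem_of_distTriang_of_isRightApprox h𝓡sub h𝓡 hR₀ hX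
    (distTriang_rotate_rotate_of_iso htri (shiftNegShift M 1) (shiftNegShift X 1)) happrox.shift

/-- **Lemma (Statement 2).** Let `𝓧` be a two-term maximal `𝓡[1]`-rigid subcategory.
For `R₀ ∈ 𝓡`, if there is a triangle `M⟦-1⟧ → X⟦-1⟧ → R₀ → M` with `X ∈ 𝓧` such that
`g : X⟦-1⟧ ⟶ R₀` is a right `𝓧[-1]`-approximation of `R₀`, then `M ∈ 𝓧`. -/
theorem mem_of_triangle_rightApprox
    (k : Type*) [Field k] [IsAlgClosed k] [Linear k C]
    [∀ X Y : C, FiniteDimensional k (X ⟶ Y)] [IsIdempotentComplete C]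
    (𝓡 𝓧 : Set C) (h𝓡sub : IsSubcat 𝓡) (h𝓡 : IsRigidSubcat 𝓡)
    (h𝓧sub : IsSubcat 𝓧) (h𝓧max : IsTwoTermMaxRelRigid 𝓡 𝓧)
    (R₀ : C) (hR₀ : R₀ ∈ 𝓡) (M X : C) (hX : X ∈ 𝓧)
    (f : M⟦(-1:ℤ)⟧ ⟶ X⟦(-1:ℤ)⟧) (g : X⟦(-1:ℤ)⟧ ⟶ R₀) (h : R₀ ⟶ M⟦(-1:ℤ)⟧⟦(1:ℤ)⟧)
    (htri : Triangle.mk f g h ∈ distTriang C)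
    (happrox : IsRightApprox (shiftSet 𝓧 (-1)) g) :
    M ∈ 𝓧 := by
  exact mem_of_triangle_rightApprox_general h𝓡sub h𝓡 h𝓧max hR₀ hX htri happrox
end

section
/- Let R be a rigid subcategory of C. If X is a contravariantly finite two-term R[1]-rigid subcategory of C, then C has a two-term weak R[1]-cluster tilting subcategory Y which contains X (Bongartz completion). -/
/-!
Setting: `C` is a Hom-finite Krull–Schmidt `k`-linear triangulated category over an
algebraically closed field `k` (Krull–Schmidt is encoded as Hom-finiteness together with
idempotent completeness). Subcategories are identified with their classes of objects and
are always assumed full, closed under isomorphisms, direct sums and direct summands.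
-/

open CategoryTheory CategoryTheory.Limits CategoryTheory.Pretriangulated Opposite

universe v u

variable {C : Type u} [Category.{v} C] [Preadditive C] [HasZeroObject C] [HasShift C ℤ]
  [∀ n : ℤ, (shiftFunctor C n).Additive] [Pretriangulated C]

/-!
The completion `𝓨` consists of the `Ext`-projectives of
`𝓝 = {N ∈ 𝓡 ∗ 𝓡[1] : [𝓡[1]](𝓧, N[1]) = 0}`, that is, of the `M ∈ 𝓝` with
`[𝓡[1]](M, 𝓝[1]) = 0`. A right `𝓧`-approximation `f : X ⟶ R[1]` with `R ∈ 𝓡`, completed to a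
triangle `R ⟶ Y ⟶ X ⟶ R[1]`, yields `Y ∈ 𝓨`; these triangles show `𝓡 ⊆ 𝓧[-1] ∗ 𝓨`, and they
force every `M` with `[𝓡[1]](M, 𝓨[1]) = 0` to satisfy `[𝓡[1]](M, 𝓝[1]) = 0`.

The closure properties of `𝓡 ∗ 𝓡[1]` all come from one criterion: `M` is two-term if and only
if some `f : A ⟶ M` with `A ∈ 𝓡` has the property that every morphism out of `M` killed by `f`
lies in the ideal `[𝓡[1]]`. For if the map `M ⟶ K` to the cone of `f` lies there, then so does the
identity of `K`, hence `K ∈ 𝓡[1]`.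
-/

section Subcategories

variable {D : Type*} [Category D] [Preadditive D]

lemma IsSubcat.biprod_mem_s5 {S : Set D} (hS : IsSubcat S) {F G : D} [HasBinaryBiproduct F G]
    (hF : F ∈ S) (hG : G ∈ S) : (F ⊞ G) ∈ S :=
  hS.2.1 hF hG ⟨biprod.inl, biprod.inr, biprod.fst, biprod.snd, by simp, by simp, by simp,
    by simp, biprod.total⟩

lemma IsSubcat.of_directSum_of_retract {S : Set D}
    (sum : ∀ ⦃F G T : D⦄, F ∈ S → G ∈ S → IsDirectSumOf T F G → T ∈ S)
    (retract : ∀ ⦃X Y : D⦄, X ∈ S → IsRetractOf Y X → Y ∈ S) : IsSubcat S :=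
  ⟨fun _ _ e hX => retract hX ⟨e.inv, e.hom, e.inv_hom_id⟩, sum, retract⟩

lemma IsSubcat.inter {S T : Set D} (hS : IsSubcat S) (hT : IsSubcat T) : IsSubcat (S ∩ T) :=
  .of_directSum_of_retract
    (fun _ _ _ hF hG h => ⟨hS.2.1 hF.1 hG.1 h, hT.2.1 hF.2 hG.2 h⟩)
    (fun _ _ hX h => ⟨hS.2.2 hX.1 h, hT.2.2 hX.2 h⟩)

end Subcategories

namespace InShiftIdeal

variable {D : Type*} [Category D] [HasShift D ℤ] {𝓡 : Set D} {A B : D}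

lemma precomp_s5 {φ : A ⟶ B} (hφ : InShiftIdeal 𝓡 φ) {A' : D} (g : A' ⟶ A) :
    InShiftIdeal 𝓡 (g ≫ φ) := by
  obtain ⟨R, hR, a, b, rfl⟩ := hφ
  exact ⟨R, hR, g ≫ a, b, (Category.assoc _ _ _).symm⟩

lemma postcomp_s5 {φ : A ⟶ B} (hφ : InShiftIdeal 𝓡 φ) {B' : D} (g : B ⟶ B') :
    InShiftIdeal 𝓡 (φ ≫ g) := by
  obtain ⟨R, hR, a, b, rfl⟩ := hφ
  exact ⟨R, hR, a, b ≫ g, Category.assoc _ _ _⟩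

lemma of_mem_shiftSet {W : D} (hW : W ∈ shiftSet 𝓡 1) (a : A ⟶ W) (b : W ⟶ B) :
    InShiftIdeal 𝓡 (a ≫ b) := by
  obtain ⟨R, hR, ⟨e⟩⟩ := hW
  exact ⟨R, hR, a ≫ e.hom, e.inv ≫ b, by simp⟩

lemma add [Preadditive D] [HasBinaryBiproducts D] [(shiftFunctor D (1 : ℤ)).Additive]
    (h𝓡 : IsSubcat 𝓡) {φ ψ : A ⟶ B} (hφ : InShiftIdeal 𝓡 φ) (hψ : InShiftIdeal 𝓡 ψ) :
    InShiftIdeal 𝓡 (φ + ψ) := by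
  obtain ⟨R, hR, a, b, rfl⟩ := hφ
  obtain ⟨R', hR', a', b', rfl⟩ := hψ
  refine ⟨R ⊞ R', h𝓡.biprod_mem_s5 hR hR',
    a ≫ biprod.inl⟦(1 : ℤ)⟧' + a' ≫ biprod.inr⟦(1 : ℤ)⟧',
    biprod.fst⟦(1 : ℤ)⟧' ≫ b + biprod.snd⟦(1 : ℤ)⟧' ≫ b', ?_⟩
  simp [← Functor.map_comp_assoc]

lemma mem_shiftSet_of_id [Preadditive D] (h𝓡 : IsSubcat 𝓡) (hA : InShiftIdeal 𝓡 (𝟙 A)) :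
    A ∈ shiftSet 𝓡 1 := by
  obtain ⟨R, hR, a, b, hab⟩ := hA
  have hretract : IsRetractOf (A⟦(-1 : ℤ)⟧) R :=
    ⟨a⟦(-1 : ℤ)⟧' ≫ (shiftShiftNeg R (1 : ℤ)).hom, (shiftShiftNeg R (1 : ℤ)).inv ≫ b⟦(-1 : ℤ)⟧',
      by rw [Category.assoc, Iso.hom_inv_id_assoc, ← Functor.map_comp, ← hab,
        CategoryTheory.Functor.map_id]⟩
  exact ⟨A⟦(-1 : ℤ)⟧, h𝓡.2.2 hR hretract, ⟨(shiftNegShift A (1 : ℤ)).symm⟩⟩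

end InShiftIdeal

section RelativeOrthogonality

variable {D : Type*} [Category D] [Preadditive D] [HasShift D ℤ]

lemma isSubcat_setOf_relOrthTo (𝓡 𝓧 : Set D) : IsSubcat {M | relOrthTo 𝓡 𝓧 M} := by
  refine .of_directSum_of_retract ?_ ?_
  · rintro F G T hF hG ⟨i, j, p, q, -, -, -, -, total⟩ X hX φ hφ
    calc φ = p ≫ i ≫ φ + q ≫ j ≫ φ := by
          rw [← Category.assoc p, ← Category.assoc q, ← Preadditive.add_comp, total,
            Category.id_comp]
      _ = 0 := by
          rw [hF X hX _ (hφ.precomp_s5 i), hG X hX _ (hφ.precomp_s5 j), comp_zero, comp_zero, add_zero]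
  · rintro M N hM ⟨s, r, hsr⟩ X hX φ hφ
    rw [← Category.id_comp φ, ← hsr, Category.assoc, hM X hX _ (hφ.precomp_s5 r), comp_zero]

lemma isSubcat_setOf_relOrthFrom [(shiftFunctor D (1 : ℤ)).Additive] (𝓡 𝓧 : Set D) :
    IsSubcat {M | relOrthFrom 𝓡 𝓧 M} := by
  refine .of_directSum_of_retract ?_ ?_
  · rintro F G T hF hG ⟨i, j, p, q, -, -, -, -, total⟩ X hX φ hφ
    calc φ = (φ ≫ p⟦(1 : ℤ)⟧') ≫ i⟦(1 : ℤ)⟧' + (φ ≫ q⟦(1 : ℤ)⟧') ≫ j⟦(1 : ℤ)⟧' := by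
          simp only [Category.assoc, ← Functor.map_comp, ← Preadditive.comp_add,
            ← Functor.map_add, total, CategoryTheory.Functor.map_id, Category.comp_id]
      _ = 0 := by
          rw [hF X hX _ (hφ.postcomp_s5 _), hG X hX _ (hφ.postcomp_s5 _), zero_comp, zero_comp, add_zero]
  · rintro M N hM ⟨s, r, hsr⟩ X hX φ hφ
    calc φ = (φ ≫ s⟦(1 : ℤ)⟧') ≫ r⟦(1 : ℤ)⟧' := by
          rw [Category.assoc, ← Functor.map_comp, hsr, CategoryTheory.Functor.map_id,
            Category.comp_id]
      _ = 0 := by rw [hM X hX _ (hφ.postcomp_s5 _), zero_comp]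

end RelativeOrthogonality

section TwoTerm

variable {𝓡 : Set C}

theorem mem_twoTerm_iff (h𝓡sub : IsSubcat 𝓡) (h𝓡 : IsRigidSubcat 𝓡) {M : C} :
    M ∈ twoTerm 𝓡 ↔
      ∃ A ∈ 𝓡, ∃ f : A ⟶ M, ∀ ⦃Z : C⦄ (x : M ⟶ Z), f ≫ x = 0 → InShiftIdeal 𝓡 x := by
  constructor
  · rintro ⟨A, hA, B, hB, f, g, h, hT⟩
    refine ⟨A, hA, f, fun Z x hx => ?_⟩
    obtain ⟨y, rfl⟩ := Triangle.yoneda_exact₂ _ hT x hx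
    exact .of_mem_shiftSet hB g y
  · rintro ⟨A, hA, f, hf⟩
    obtain ⟨K, g, h, hT⟩ := distinguished_cocone_triangle f
    obtain ⟨R, hR, a, b, hab⟩ := hf g (comp_distTriang_mor_zero₁₂ _ hT)
    obtain ⟨c, hc⟩ : ∃ c : K ⟶ R⟦(1 : ℤ)⟧, a = g ≫ c :=
      Triangle.yoneda_exact₂ _ hT a (h𝓡 A hA R hR (f ≫ a))
    obtain ⟨x, hx⟩ : ∃ x : A⟦(1 : ℤ)⟧ ⟶ K, 𝟙 K - c ≫ b = h ≫ x :=
      Triangle.yoneda_exact₃ _ hT (𝟙 K - c ≫ b) (by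
        change g ≫ (𝟙 K - c ≫ b) = 0
        rw [Preadditive.comp_sub, ← Category.assoc, ← hc, ← hab, Category.comp_id, sub_self])
    have hK : InShiftIdeal 𝓡 (𝟙 K) := by
      rw [← sub_add_cancel (𝟙 K) (c ≫ b), hx]
      exact .add h𝓡sub ⟨A, hA, h, x, rfl⟩ ⟨R, hR, c, b, rfl⟩
    exact ⟨A, hA, K, hK.mem_shiftSet_of_id h𝓡sub, f, g, h, hT⟩

theorem isSubcat_twoTerm (h𝓡sub : IsSubcat 𝓡) (h𝓡 : IsRigidSubcat 𝓡) :
    IsSubcat (twoTerm 𝓡) := by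
  refine .of_directSum_of_retract ?_ ?_
  · rintro F G T hF hG ⟨i, j, p, q, -, -, -, -, total⟩
    obtain ⟨A, hA, f, hf⟩ := (mem_twoTerm_iff h𝓡sub h𝓡).1 hF
    obtain ⟨B, hB, g, hg⟩ := (mem_twoTerm_iff h𝓡sub h𝓡).1 hG
    refine (mem_twoTerm_iff h𝓡sub h𝓡).2 ⟨A ⊞ B, h𝓡sub.biprod_mem_s5 hA hB,
      biprod.desc (f ≫ i) (g ≫ j), fun Z x hx => ?_⟩
    have hi : InShiftIdeal 𝓡 (i ≫ x) := hf _ (by simpa using biprod.inl ≫= hx)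
    have hj : InShiftIdeal 𝓡 (j ≫ x) := hg _ (by simpa using biprod.inr ≫= hx)
    have hsplit : x = p ≫ i ≫ x + q ≫ j ≫ x := by
      rw [← Category.assoc p, ← Category.assoc q, ← Preadditive.add_comp, total, Category.id_comp]
    exact hsplit ▸ (hi.precomp_s5 p).add h𝓡sub (hj.precomp_s5 q)
  · rintro M N hM ⟨s, r, hsr⟩
    obtain ⟨A, hA, f, hf⟩ := (mem_twoTerm_iff h𝓡sub h𝓡).1 hM
    refine (mem_twoTerm_iff h𝓡sub h𝓡).2 ⟨A, hA, f ≫ r, fun Z x hx => ?_⟩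
    have hrx : InShiftIdeal 𝓡 (r ≫ x) := hf _ (by rw [← Category.assoc, hx])
    simpa [reassoc_of% hsr] using hrx.precomp_s5 s

theorem starSet_twoTerm_subset_twoTerm (h𝓡sub : IsSubcat 𝓡) (h𝓡 : IsRigidSubcat 𝓡) :
    starSet 𝓡 (twoTerm 𝓡) ⊆ twoTerm 𝓡 := by
  rintro Y ⟨R, hR, X, hX, i, p, f, hT⟩
  obtain ⟨A, hA, c, hc⟩ := (mem_twoTerm_iff h𝓡sub h𝓡).1 hX
  obtain ⟨b, hb⟩ : ∃ b : A ⟶ Y, c = b ≫ p :=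
    Triangle.coyoneda_exact₃ _ hT c (h𝓡 A hA R hR (c ≫ f))
  refine (mem_twoTerm_iff h𝓡sub h𝓡).2 ⟨R ⊞ A, h𝓡sub.biprod_mem_s5 hR hA,
    biprod.desc i b, fun Z x hx => ?_⟩
  have hix : i ≫ x = 0 := by simpa using biprod.inl ≫= hx
  have hbx : b ≫ x = 0 := by simpa using biprod.inr ≫= hx
  obtain ⟨y, rfl⟩ : ∃ y : X ⟶ Z, x = p ≫ y := Triangle.yoneda_exact₂ _ hT x hix
  exact (hc y (by rw [hb, Category.assoc, hbx])).precomp_s5 p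

end TwoTerm

section Triangles

variable {𝓡 𝓧 𝓨 : Set C}

lemma mem_starSet_shiftSet_neg_one_iff {R : C} :
    R ∈ starSet (shiftSet 𝓧 (-1)) 𝓨 ↔
      ∃ Y ∈ 𝓨, ∃ X ∈ 𝓧, ∃ (i : R ⟶ Y) (p : Y ⟶ X) (f : X ⟶ R⟦(1 : ℤ)⟧),
        Triangle.mk i p f ∈ distTriang C := by
  constructor
  · rintro ⟨W, ⟨X, hX, ⟨e⟩⟩, Y, hY, g, i, h, hT⟩
    let e' : W⟦(1 : ℤ)⟧ ≅ X :=
      (shiftFunctor C (1 : ℤ)).mapIso e ≪≫ shiftNegShift X (1 : ℤ)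
    refine ⟨Y, hY, X, hX, i, h ≫ e'.hom, e'.inv ≫ (-g⟦(1 : ℤ)⟧'),
      isomorphic_distinguished _ (rot_of_distTriang _ hT) _ ?_⟩
    refine Triangle.isoMk _ _ (Iso.refl R) (Iso.refl Y) e'.symm ?_ ?_ ?_
    · exact (Category.comp_id i).trans (Category.id_comp i).symm
    · change (h ≫ e'.hom) ≫ e'.inv = 𝟙 Y ≫ h
      simp
    · change (e'.inv ≫ (-g⟦(1 : ℤ)⟧')) ≫ (𝟙 R)⟦(1 : ℤ)⟧' = e'.inv ≫ (-g⟦(1 : ℤ)⟧')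
      simp
  · rintro ⟨Y, hY, X, hX, i, p, f, hT⟩
    exact ⟨_, ⟨X, hX, ⟨Iso.refl _⟩⟩, Y, hY, _, _, _, inv_rot_of_distTriang _ hT⟩

lemma relOrthTo_of_distTriang_s5 (h𝓡 : IsRigidSubcat 𝓡) {R Y X : C} (hR : R ∈ 𝓡) {i : R ⟶ Y}
    {p : Y ⟶ X} {f : X ⟶ R⟦(1 : ℤ)⟧} (hT : Triangle.mk i p f ∈ distTriang C)
    (hX : relOrthTo 𝓡 𝓧 X) : relOrthTo 𝓡 𝓧 Y := by
  rintro N hN φ ⟨R', hR', a, b, rfl⟩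
  obtain ⟨a', rfl⟩ : ∃ a' : X ⟶ R'⟦(1 : ℤ)⟧, a = p ≫ a' :=
    Triangle.yoneda_exact₂ _ hT a (h𝓡 R hR R' hR' (i ≫ a))
  rw [Category.assoc, hX N hN (a' ≫ b) ⟨R', hR', a', b, rfl⟩, comp_zero]

lemma relOrthFrom_of_distTriang {R Y X : C} {i : R ⟶ Y} {p : Y ⟶ X} {f : X ⟶ R⟦(1 : ℤ)⟧}
    (hT : Triangle.mk i p f ∈ distTriang C) (hf : IsRightApprox 𝓧 f)
    (hX : relOrthFrom 𝓡 𝓧 X) : relOrthFrom 𝓡 𝓧 Y := by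
  intro X' hX' φ hφ
  obtain ⟨ψ, hψ⟩ : ∃ ψ : X' ⟶ R⟦(1 : ℤ)⟧, φ = ψ ≫ (-i⟦(1 : ℤ)⟧') :=
    Triangle.coyoneda_exact₃ _ (rot_of_distTriang _ (rot_of_distTriang _ hT)) φ (by
      change φ ≫ (-p⟦(1 : ℤ)⟧') = 0
      rw [Preadditive.comp_neg, hX X' hX' _ (hφ.postcomp_s5 _), neg_zero])
  obtain ⟨χ, rfl⟩ := hf X' hX' ψ
  have hfi : f ≫ i⟦(1 : ℤ)⟧' = 0 := comp_distTriang_mor_zero₃₁ _ hT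
  rw [hψ, Preadditive.comp_neg, Category.assoc, hfi, comp_zero, neg_zero]

theorem relOrthTo_of_subset_starSet (h𝓡 : 𝓡 ⊆ starSet (shiftSet 𝓧 (-1)) 𝓨) {M : C}
    (hM : relOrthTo 𝓡 𝓨 M) : relOrthTo 𝓡 {N | relOrthFrom 𝓡 𝓧 N} M := by
  rintro N hN φ ⟨R, hR, a, b, rfl⟩
  obtain ⟨Y, hY, X, hX, i, p, f, hT⟩ := mem_starSet_shiftSet_neg_one_iff.1 (h𝓡 hR)
  obtain ⟨a', rfl⟩ : ∃ a' : M ⟶ X, a = a' ≫ f :=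
    Triangle.coyoneda_exact₁ _ hT a (hM Y hY _ ⟨R, hR, a, i⟦(1 : ℤ)⟧', rfl⟩)
  rw [Category.assoc, hN X hX (f ≫ b) ⟨R, hR, f, b, rfl⟩, comp_zero]

end Triangles

section Completion

/-- The two-term objects `N` with `[𝓡[1]](𝓧, N[1]) = 0`: the analogue of the torsion class of
modules `N` with `Ext¹(X, N) = 0` in the classical Bongartz completion. -/
def relPerp (𝓡 𝓧 : Set C) : Set C := twoTerm 𝓡 ∩ {N | relOrthFrom 𝓡 𝓧 N}

/-- The Bongartz completion of `𝓧` relative to `𝓡`: the objects `M` of `relPerp 𝓡 𝓧` that are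
`Ext`-projective there, in the sense that `[𝓡[1]](M, N[1]) = 0` for all `N ∈ relPerp 𝓡 𝓧`. -/
def bongartzCompletion (𝓡 𝓧 : Set C) : Set C :=
  relPerp 𝓡 𝓧 ∩ {M | relOrthTo 𝓡 (relPerp 𝓡 𝓧) M}

variable {𝓡 𝓧 : Set C}

theorem isSubcat_bongartzCompletion (h𝓡sub : IsSubcat 𝓡) (h𝓡 : IsRigidSubcat 𝓡) :
    IsSubcat (bongartzCompletion 𝓡 𝓧) :=
  ((isSubcat_twoTerm h𝓡sub h𝓡).inter (isSubcat_setOf_relOrthFrom 𝓡 𝓧)).inter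
    (isSubcat_setOf_relOrthTo 𝓡 _)

theorem subset_bongartzCompletion (h𝓧tt : 𝓧 ⊆ twoTerm 𝓡) (h𝓧rig : IsRelRigid 𝓡 𝓧) :
    𝓧 ⊆ bongartzCompletion 𝓡 𝓧 := fun X hX =>
  ⟨⟨h𝓧tt hX, fun X' hX' => h𝓧rig X' hX' X hX⟩, fun _ hN => hN.2 X hX⟩

theorem mem_bongartzCompletion_of_distTriang (h𝓡sub : IsSubcat 𝓡) (h𝓡 : IsRigidSubcat 𝓡)
    {R Y X : C} (hR : R ∈ 𝓡) (hX : X ∈ bongartzCompletion 𝓡 𝓧) {i : R ⟶ Y} {p : Y ⟶ X}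
    {f : X ⟶ R⟦(1 : ℤ)⟧} (hT : Triangle.mk i p f ∈ distTriang C) (hf : IsRightApprox 𝓧 f) :
    Y ∈ bongartzCompletion 𝓡 𝓧 :=
  ⟨⟨starSet_twoTerm_subset_twoTerm h𝓡sub h𝓡 ⟨R, hR, X, hX.1.1, i, p, f, hT⟩,
    relOrthFrom_of_distTriang hT hf hX.1.2⟩, relOrthTo_of_distTriang_s5 h𝓡 hR hT hX.2⟩

theorem subset_starSet_bongartzCompletion (h𝓡sub : IsSubcat 𝓡) (h𝓡 : IsRigidSubcat 𝓡)
    (h𝓧 : 𝓧 ⊆ bongartzCompletion 𝓡 𝓧)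
    (happrox : ∀ R ∈ 𝓡, ∃ X ∈ 𝓧, ∃ f : X ⟶ R⟦(1 : ℤ)⟧, IsRightApprox 𝓧 f) :
    𝓡 ⊆ starSet (shiftSet 𝓧 (-1)) (bongartzCompletion 𝓡 𝓧) := by
  intro R hR
  obtain ⟨X, hX, f, hf⟩ := happrox R hR
  obtain ⟨Y, i, p, hT⟩ := distinguished_cocone_triangle₂ f
  exact mem_starSet_shiftSet_neg_one_iff.2 ⟨Y,
    mem_bongartzCompletion_of_distTriang h𝓡sub h𝓡 hR (h𝓧 hX) hT hf, X, hX, i, p, f, hT⟩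

theorem mem_bongartzCompletion_iff (h𝓧 : 𝓧 ⊆ bongartzCompletion 𝓡 𝓧)
    (h𝓡 : 𝓡 ⊆ starSet (shiftSet 𝓧 (-1)) (bongartzCompletion 𝓡 𝓧)) (M : C) :
    M ∈ bongartzCompletion 𝓡 𝓧 ↔ M ∈ twoTerm 𝓡 ∧
      relOrthTo 𝓡 (bongartzCompletion 𝓡 𝓧) M ∧ relOrthFrom 𝓡 (bongartzCompletion 𝓡 𝓧) M := by
  constructor
  · intro hM
    exact ⟨hM.1.1, fun Y hY => hM.2 Y hY.1, fun Y hY => hY.2 M hM.1⟩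
  · rintro ⟨hMtt, hMto, hMfrom⟩
    exact ⟨⟨hMtt, fun X hX => hMfrom X (h𝓧 hX)⟩,
      fun N hN => relOrthTo_of_subset_starSet h𝓡 hMto N hN.2⟩

end Completion

theorem bongartz_completion_general (𝓡 𝓧 : Set C) (h𝓡sub : IsSubcat 𝓡) (h𝓡 : IsRigidSubcat 𝓡)
    (h𝓧tt : 𝓧 ⊆ twoTerm 𝓡) (h𝓧rig : IsRelRigid 𝓡 𝓧)
    (happrox : ∀ R ∈ 𝓡, ∃ X ∈ 𝓧, ∃ f : X ⟶ R⟦(1 : ℤ)⟧, IsRightApprox 𝓧 f) :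
    ∃ 𝓨 : Set C, IsSubcat 𝓨 ∧ IsTwoTermWeakRelCT 𝓡 𝓨 ∧ 𝓧 ⊆ 𝓨 := by
  have h𝓧𝓨 := subset_bongartzCompletion h𝓧tt h𝓧rig
  have hstar := subset_starSet_bongartzCompletion h𝓡sub h𝓡 h𝓧𝓨 happrox
  refine ⟨bongartzCompletion 𝓡 𝓧, isSubcat_bongartzCompletion h𝓡sub h𝓡,
    ⟨fun M hM => hM.1.1, fun R hR => ?_, mem_bongartzCompletion_iff h𝓧𝓨 hstar⟩, h𝓧𝓨⟩
  obtain ⟨W, ⟨X, hX, e⟩, hW⟩ := hstar hR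
  exact ⟨W, ⟨X, h𝓧𝓨 hX, e⟩, hW⟩

/-- **Theorem (Statement 5, Bongartz completion).** Let `𝓡` be a rigid subcategory of `C`.
If `𝓧` is a contravariantly finite two-term `𝓡[1]`-rigid subcategory of `C`, then `C` has
a two-term weak `𝓡[1]`-cluster tilting subcategory `𝓨` containing `𝓧`. -/
theorem bongartz_completion
    (k : Type*) [Field k] [IsAlgClosed k] [Linear k C]
    [∀ X Y : C, FiniteDimensional k (X ⟶ Y)] [IsIdempotentComplete C]
    (𝓡 𝓧 : Set C) (h𝓡sub : IsSubcat 𝓡) (h𝓡 : IsRigidSubcat 𝓡)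
    (h𝓧sub : IsSubcat 𝓧) (h𝓧tt : 𝓧 ⊆ twoTerm 𝓡)
    (h𝓧rig : IsRelRigid 𝓡 𝓧) (h𝓧cf : ContravariantlyFinite 𝓧) :
    ∃ 𝓨 : Set C, IsSubcat 𝓨 ∧ IsTwoTermWeakRelCT 𝓡 𝓨 ∧ 𝓧 ⊆ 𝓨 :=
  bongartz_completion_general 𝓡 𝓧 h𝓡sub h𝓡 h𝓧tt h𝓧rig fun R _ => h𝓧cf (R⟦(1 : ℤ)⟧)
end
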